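/- arXiv:1606.02845 — 2 statements merged into one kernel-verified Lean document; each statement's English description precedes it below -/
import Mathlib

section
/- ∫₀¹ (1/(1+x)) · ( ∫₀ˣ log(y)/(y−1) dy ) dx = ζ(3) − (π²/12)·log(2), where ζ(3) = Σ_{k=1}^{∞} 1/k³. -/
open MeasureTheory Real

open Set Filter
open scoped Nat Topology Interval

/-! Exchanging the order of integration turns the double integral into the integral over `(0, 1)`
of `log (2 / (1 + x)) * log x / (x - 1)`. Write `1 / (x - 1) = 1 / (1 + x) - 2 / (1 - x²)`. The
first summand is integrated by parts; in the second, the involution `x ↦ (1 - x) / (1 + x)` turns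
`2 dx / (1 - x²)` into `dx / x`. There remain the integrals of `log² (1 + x) / x` and
`log (1 - x) log (1 + x) / x`, and these follow by polarization from the integrals of `log² u / x`
with `u = 1 - x`, `u = 1 - x²` and `u = (1 - x) / (1 + x)`. Each of the latter is, after a change
of variables, a combination of the integrals of `log² x / (1 - x)` and `log² x / (1 + x)`. The
second of these reduces to the first by `x ↦ x²`, and the first is a multiple of `ζ(3)` by expansion
into a geometric series. -/

lemma integral_mul_primitive_eq {f g : ℝ → ℝ} {a b : ℝ}
    (hf : IntervalIntegrable f volume a b) (hg : IntervalIntegrable g volume a b) :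
    ∫ x in a..b, g x * ∫ y in a..x, f y = ∫ y in a..b, (∫ x in y..b, g x) * f y := by
  have hparts := AbsolutelyContinuousOnInterval.integral_mul_deriv_eq_deriv_mul
    (hg.absolutelyContinuousOnInterval_intervalIntegral right_mem_uIcc)
    (hf.absolutelyContinuousOnInterval_intervalIntegral left_mem_uIcc)
  have hF : ∀ᵐ x, x ∈ Ι a b → deriv (fun x ↦ ∫ y in a..x, f y) x = f x := by
    filter_upwards [hf.ae_hasDerivAt_integral] with x hx hxab
    exact (hx (uIoc_subset_uIcc hxab) a left_mem_uIcc).deriv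
  have hG : ∀ᵐ x, x ∈ Ι a b → deriv (fun x ↦ ∫ y in b..x, g y) x = g x := by
    filter_upwards [hg.ae_hasDerivAt_integral] with x hx hxab
    exact (hx (uIoc_subset_uIcc hxab) b right_mem_uIcc).deriv
  calc ∫ x in a..b, g x * ∫ y in a..x, f y
      = ∫ x in a..b, deriv (fun x ↦ ∫ y in b..x, g y) x * ∫ y in a..x, f y :=
        intervalIntegral.integral_congr_ae <| hG.mono fun x hx hxab ↦ by rw [hx hxab]
    _ = -∫ x in a..b, (∫ y in b..x, g y) * deriv (fun x ↦ ∫ y in a..x, f y) x := by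
        simp [hparts]
    _ = ∫ y in a..b, (∫ x in y..b, g x) * f y := by
        rw [← intervalIntegral.integral_neg]
        refine intervalIntegral.integral_congr_ae <| hF.mono fun x hx hxab ↦ ?_
        rw [hx hxab, intervalIntegral.integral_symm, neg_mul, neg_neg]

lemma integrableOn_Ioo_comp_one_sub_iff {E : Type*} [NormedAddCommGroup E] (g : ℝ → E) :
    IntegrableOn (fun x ↦ g (1 - x)) (Ioo 0 1) ↔ IntegrableOn g (Ioo 0 1) := by
  rw [← intervalIntegrable_iff_integrableOn_Ioo_of_le zero_le_one,
    ← intervalIntegrable_iff_integrableOn_Ioo_of_le zero_le_one]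
  simpa [intervalIntegrable_iff, uIoc_comm] using!
    IntervalIntegrable.comp_sub_left_iff (f := g) (a := 0) (b := 1) 1

section ChangeOfVariables

variable {E : Type*} [NormedAddCommGroup E] [NormedSpace ℝ E]

lemma bijOn_pow_Ioo {p : ℕ} (hp : p ≠ 0) :
    BijOn (fun x : ℝ ↦ x ^ p) (Ioo 0 1) (Ioo 0 1) := by
  refine ⟨fun x hx ↦ ⟨pow_pos hx.1 p, pow_lt_one₀ hx.1.le hx.2 hp⟩,
    (pow_left_strictMonoOn₀ hp).injOn.mono fun x hx ↦ hx.1.le, fun y hy ↦ ?_⟩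
  exact ⟨y ^ (p : ℝ)⁻¹, ⟨rpow_pos_of_pos hy.1 _, rpow_lt_one hy.1.le hy.2 (by positivity)⟩,
    rpow_inv_natCast_pow hy.1.le hp⟩

lemma deriv_pow_smul_inv_pow_smul {p : ℕ} (hp : p ≠ 0) {x : ℝ} (hx : x ≠ 0) (v : E) :
    ((p : ℝ) * x ^ (p - 1)) • (x ^ p)⁻¹ • v = (p : ℝ) • x⁻¹ • v := by
  rw [smul_smul, smul_smul, ← div_eq_mul_inv, mul_div_assoc, ← mul_pow_sub_one hp x]
  field_simp

lemma integrableOn_inv_smul_comp_pow_iff {p : ℕ} (hp : p ≠ 0) (g : ℝ → E) :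
    IntegrableOn (fun x ↦ x⁻¹ • g (x ^ p)) (Ioo 0 1) ↔
      IntegrableOn (fun x ↦ x⁻¹ • g x) (Ioo 0 1) := by
  have hsubst := integrableOn_image_iff_integrableOn_deriv_smul_of_monotoneOn measurableSet_Ioo
    (fun x _ ↦ (hasDerivAt_pow p x).hasDerivWithinAt)
    (pow_left_monotoneOn.mono fun x (hx : x ∈ Ioo (0 : ℝ) 1) ↦ hx.1.le) fun x ↦ x⁻¹ • g x
  rw [(bijOn_pow_Ioo hp).image_eq] at hsubst
  rw [hsubst, integrableOn_congr_fun
    (fun x hx ↦ deriv_pow_smul_inv_pow_smul hp hx.1.ne' (g (x ^ p))) measurableSet_Ioo]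
  exact (integrable_smul_iff (Nat.cast_ne_zero.2 hp) _).symm

lemma integral_inv_smul_comp_pow {p : ℕ} (hp : p ≠ 0) (g : ℝ → E) :
    ∫ x in Ioo (0 : ℝ) 1, x⁻¹ • g (x ^ p) = (p : ℝ)⁻¹ • ∫ x in Ioo (0 : ℝ) 1, x⁻¹ • g x := by
  have hsubst := integral_image_eq_integral_deriv_smul_of_monotoneOn measurableSet_Ioo
    (fun x _ ↦ (hasDerivAt_pow p x).hasDerivWithinAt)
    (pow_left_monotoneOn.mono fun x (hx : x ∈ Ioo (0 : ℝ) 1) ↦ hx.1.le) fun x ↦ x⁻¹ • g x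
  rw [(bijOn_pow_Ioo hp).image_eq, setIntegral_congr_fun measurableSet_Ioo
    fun x hx ↦ deriv_pow_smul_inv_pow_smul hp hx.1.ne' (g (x ^ p)), integral_smul] at hsubst
  rw [hsubst, inv_smul_smul₀ (Nat.cast_ne_zero.2 hp)]

/-- The involution `x ↦ (1 - x) / (1 + x)` of the unit interval; it carries `2 dx / (1 - x²)` to
`dx / x`. -/
noncomputable def cayley (x : ℝ) : ℝ := (1 - x) / (1 + x)

lemma one_add_cayley {x : ℝ} (hx : 1 + x ≠ 0) : 1 + cayley x = 2 / (1 + x) := by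
  unfold cayley
  field_simp
  ring

lemma one_sub_cayley {x : ℝ} (hx : 1 + x ≠ 0) : 1 - cayley x = 2 * x / (1 + x) := by
  unfold cayley
  field_simp
  ring

lemma cayley_cayley {x : ℝ} (hx : 1 + x ≠ 0) : cayley (cayley x) = x := by
  rw [cayley, one_add_cayley hx, one_sub_cayley hx]
  field_simp

lemma hasDerivAt_cayley {x : ℝ} (hx : 1 + x ≠ 0) : HasDerivAt cayley (-(2 / (1 + x) ^ 2)) x := by
  convert! ((hasDerivAt_id x).const_sub 1).div ((hasDerivAt_id x).const_add 1) hx using 1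
  simp only [id]
  ring

lemma mapsTo_cayley_Ioo : MapsTo cayley (Ioo 0 1) (Ioo 0 1) := fun x hx ↦ by
  have hpos : 0 < 1 + x := by linarith [hx.1]
  exact ⟨div_pos (by linarith [hx.2]) hpos, (div_lt_one hpos).2 (by linarith [hx.1])⟩

lemma bijOn_cayley_Ioo : BijOn cayley (Ioo 0 1) (Ioo 0 1) :=
  have hinv : LeftInvOn cayley cayley (Ioo 0 1) := fun x hx ↦ cayley_cayley (by linarith [hx.1])
  InvOn.bijOn ⟨hinv, hinv⟩ mapsTo_cayley_Ioo mapsTo_cayley_Ioo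

lemma antitoneOn_cayley_Ioi : AntitoneOn cayley (Ioi (-1)) := fun x hx y hy hxy ↦ by
  have hx' : 0 < 1 + x := neg_lt_iff_pos_add'.1 hx
  have hy' : 0 < 1 + y := neg_lt_iff_pos_add'.1 hy
  rw [cayley, cayley, div_le_div_iff₀ hy' hx']
  linarith

lemma antitoneOn_cayley_Ioo : AntitoneOn cayley (Ioo 0 1) :=
  antitoneOn_cayley_Ioi.mono fun _ hx ↦ neg_one_lt_zero.trans hx.1

lemma deriv_cayley_smul_comp {x : ℝ} (hx : x ∈ Ioo (0 : ℝ) 1) (v : E) :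
    (- -(2 / (1 + x) ^ 2)) • (2 / (1 - cayley x ^ 2)) • v = x⁻¹ • v := by
  have hx0 : x ≠ 0 := hx.1.ne'
  have hx1 : 1 + x ≠ 0 := by linarith [hx.1]
  have hfactor : 1 - cayley x ^ 2 = (1 - cayley x) * (1 + cayley x) := by ring
  rw [smul_smul, hfactor, one_sub_cayley hx1, one_add_cayley hx1]
  congr 1
  field_simp

lemma hasDerivWithinAt_cayley_Ioo :
    ∀ x ∈ Ioo (0 : ℝ) 1, HasDerivWithinAt cayley (-(2 / (1 + x) ^ 2)) (Ioo 0 1) x :=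
  fun x hx ↦ (hasDerivAt_cayley (by linarith [hx.1])).hasDerivWithinAt

lemma integrableOn_inv_smul_comp_cayley_iff (g : ℝ → E) :
    IntegrableOn (fun x ↦ x⁻¹ • g (cayley x)) (Ioo 0 1) ↔
      IntegrableOn (fun x ↦ (2 / (1 - x ^ 2)) • g x) (Ioo 0 1) := by
  have hsubst := integrableOn_image_iff_integrableOn_deriv_smul_of_antitoneOn measurableSet_Ioo
    hasDerivWithinAt_cayley_Ioo antitoneOn_cayley_Ioo fun x ↦ (2 / (1 - x ^ 2)) • g x
  rw [bijOn_cayley_Ioo.image_eq, integrableOn_congr_fun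
    (fun x hx ↦ deriv_cayley_smul_comp hx (g (cayley x))) measurableSet_Ioo] at hsubst
  exact hsubst.symm

lemma integral_inv_smul_comp_cayley (g : ℝ → E) :
    ∫ x in Ioo (0 : ℝ) 1, x⁻¹ • g (cayley x) =
      ∫ x in Ioo (0 : ℝ) 1, (2 / (1 - x ^ 2)) • g x := by
  have hsubst := integral_image_eq_integral_deriv_smul_of_antitoneOn measurableSet_Ioo
    hasDerivWithinAt_cayley_Ioo antitoneOn_cayley_Ioo fun x ↦ (2 / (1 - x ^ 2)) • g x
  rw [bijOn_cayley_Ioo.image_eq, setIntegral_congr_fun measurableSet_Ioo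
    fun x hx ↦ deriv_cayley_smul_comp hx (g (cayley x))] at hsubst
  exact hsubst.symm

lemma integral_Ioo_comp_one_sub (g : ℝ → E) :
    ∫ x in Ioo (0 : ℝ) 1, g (1 - x) = ∫ x in Ioo (0 : ℝ) 1, g x := by
  simpa [intervalIntegral.integral_of_le, integral_Ioc_eq_integral_Ioo]
    using intervalIntegral.integral_comp_sub_left (a := 0) (b := 1) g 1

lemma image_exp_neg_Ioi : (fun t : ℝ ↦ exp (-t)) '' Ioi 0 = Ioo 0 1 := by
  rw [← image_image, image_neg_Ioi, neg_zero, image_exp_Iio, exp_zero]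

lemma hasDerivAt_exp_neg (t : ℝ) : HasDerivAt (fun t : ℝ ↦ exp (-t)) (-exp (-t)) t := by
  simpa using (hasDerivAt_neg t).exp

lemma antitone_exp_neg : Antitone fun t : ℝ ↦ exp (-t) := fun _ _ h ↦ exp_le_exp.2 (neg_le_neg h)

lemma integrableOn_Ioo_iff_comp_exp_neg (g : ℝ → E) :
    IntegrableOn g (Ioo 0 1) ↔ IntegrableOn (fun t ↦ exp (-t) • g (exp (-t))) (Ioi 0) := by
  simpa only [image_exp_neg_Ioi, neg_neg] using
    integrableOn_image_iff_integrableOn_deriv_smul_of_antitoneOn measurableSet_Ioi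
      (fun t _ ↦ (hasDerivAt_exp_neg t).hasDerivWithinAt) (antitone_exp_neg.antitoneOn (Ioi 0)) g

lemma integral_Ioo_eq_comp_exp_neg (g : ℝ → E) :
    ∫ x in Ioo (0 : ℝ) 1, g x = ∫ t in Ioi (0 : ℝ), exp (-t) • g (exp (-t)) := by
  simpa only [image_exp_neg_Ioi, neg_neg] using
    integral_image_eq_integral_deriv_smul_of_antitoneOn measurableSet_Ioi
      (fun t _ ↦ (hasDerivAt_exp_neg t).hasDerivWithinAt) (antitone_exp_neg.antitoneOn (Ioi 0)) g

end ChangeOfVariables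

lemma integrableOn_pow_mul_exp_neg_mul (k : ℕ) {r : ℝ} (hr : 0 < r) :
    IntegrableOn (fun t : ℝ ↦ t ^ k * exp (-(r * t))) (Ioi 0) := by
  simpa using integrableOn_rpow_mul_exp_neg_mul_rpow (s := k)
    (by linarith [k.cast_nonneg (α := ℝ)]) one_pos hr

lemma integral_pow_mul_exp_neg_mul (k : ℕ) {r : ℝ} (hr : 0 < r) :
    ∫ t in Ioi (0 : ℝ), t ^ k * exp (-(r * t)) = k ! / r ^ (k + 1) := by
  have h := integral_rpow_mul_exp_neg_mul_Ioi (a := k + 1) (by positivity) hr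
  rw [Gamma_nat_eq_factorial, add_sub_cancel_right, ← Nat.cast_add_one, rpow_natCast] at h
  simpa [div_eq_inv_mul] using h

lemma exp_neg_mul_pow_mul_log_pow (n k : ℕ) (t : ℝ) :
    exp (-t) • (exp (-t) ^ n * log (exp (-t)) ^ k) =
      (-1) ^ k * (t ^ k * exp (-((n + 1) * t))) := by
  have hexp : exp (-((n + 1) * t)) = exp (-t) * exp (-t) ^ n := by
    rw [← pow_succ', ← exp_nat_mul]
    push_cast
    ring_nf
  rw [log_exp, hexp, neg_pow, smul_eq_mul]
  ring

lemma integrableOn_pow_mul_log_pow (n k : ℕ) :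
    IntegrableOn (fun x : ℝ ↦ x ^ n * log x ^ k) (Ioo 0 1) := by
  simp only [integrableOn_Ioo_iff_comp_exp_neg, exp_neg_mul_pow_mul_log_pow]
  exact (integrableOn_pow_mul_exp_neg_mul k n.cast_add_one_pos).const_mul _

lemma integral_pow_mul_log_pow (n k : ℕ) :
    ∫ x in Ioo (0 : ℝ) 1, x ^ n * log x ^ k = (-1) ^ k * (k ! / (n + 1) ^ (k + 1)) := by
  simp only [integral_Ioo_eq_comp_exp_neg, exp_neg_mul_pow_mul_log_pow]
  rw [integral_const_mul, integral_pow_mul_exp_neg_mul k n.cast_add_one_pos]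

lemma integrableOn_log_pow (k : ℕ) : IntegrableOn (fun x : ℝ ↦ log x ^ k) (Ioo 0 1) := by
  simpa using integrableOn_pow_mul_log_pow 0 k

lemma abs_log_div_one_sub_le {x : ℝ} (hx : x ∈ Ioo (0 : ℝ) 1) :
    |log x / (1 - x)| ≤ 1 + |log x| := by
  have hpos : 0 < 1 - x := by linarith [hx.2]
  have hlog : x - 1 ≤ x * log x := by
    have := mul_le_mul_of_nonneg_left (one_sub_inv_le_log_of_pos hx.1) hx.1.le
    rwa [mul_sub, mul_one, mul_inv_cancel₀ hx.1.ne'] at this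
  rw [abs_div, abs_of_pos hpos, div_le_iff₀ hpos, abs_of_nonpos (log_nonpos hx.1.le hx.2.le)]
  linarith

lemma integrableOn_log_pow_succ_div_one_sub (k : ℕ) :
    IntegrableOn (fun x : ℝ ↦ log x ^ (k + 1) / (1 - x)) (Ioo 0 1) := by
  refine Integrable.mono' ((integrableOn_log_pow k).abs.add (integrableOn_log_pow (k + 1)).abs)
    (by fun_prop : Measurable _).aestronglyMeasurable
    ((ae_restrict_iff' measurableSet_Ioo).2 (.of_forall fun x hx ↦ ?_))
  calc ‖log x ^ (k + 1) / (1 - x)‖ = |log x ^ k| * |log x / (1 - x)| := by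
        rw [norm_eq_abs, pow_succ, mul_div_assoc, abs_mul]
    _ ≤ |log x ^ k| * (1 + |log x|) := by gcongr; exact abs_log_div_one_sub_le hx
    _ = |log x ^ k| + |log x ^ (k + 1)| := by rw [mul_add, mul_one, pow_succ, abs_mul]

lemma integrableOn_log_pow_div_one_add (k : ℕ) :
    IntegrableOn (fun x : ℝ ↦ log x ^ k / (1 + x)) (Ioo 0 1) := by
  refine Integrable.mono (integrableOn_log_pow k)
    (by fun_prop : Measurable _).aestronglyMeasurable
    ((ae_restrict_iff' measurableSet_Ioo).2 (.of_forall fun x hx ↦ ?_))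
  rw [norm_div, norm_of_nonneg (by linarith [hx.1] : 0 ≤ 1 + x)]
  exact div_le_self (norm_nonneg _) (by linarith [hx.1])

lemma summable_one_div_add_one_pow {s : ℕ} (hs : 1 < s) :
    Summable fun n : ℕ ↦ 1 / ((n : ℝ) + 1) ^ s := by
  simpa using (summable_nat_add_iff 1).2 (summable_one_div_nat_pow.2 hs)

lemma norm_pow_mul_log_pow {x : ℝ} (hx : x ∈ Ioo (0 : ℝ) 1) (n k : ℕ) :
    ‖x ^ n * log x ^ k‖ = (-1) ^ k * (x ^ n * log x ^ k) := by
  rw [norm_mul, norm_pow, norm_pow, norm_of_nonneg hx.1.le,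
    norm_of_nonpos (log_nonpos hx.1.le hx.2.le), neg_pow]
  ring

lemma integral_log_pow_succ_div_one_sub (k : ℕ) :
    ∫ x in Ioo (0 : ℝ) 1, log x ^ (k + 1) / (1 - x) =
      (-1) ^ (k + 1) * (k + 1)! * ∑' n : ℕ, 1 / ((n : ℝ) + 1) ^ (k + 2) := by
  have hnorm (n : ℕ) : ∫ x in Ioo (0 : ℝ) 1, ‖x ^ n * log x ^ (k + 1)‖ =
      (k + 1)! * (1 / ((n : ℝ) + 1) ^ (k + 2)) := by
    rw [setIntegral_congr_fun measurableSet_Ioo fun x hx ↦ norm_pow_mul_log_pow hx n (k + 1),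
      integral_const_mul, integral_pow_mul_log_pow, ← mul_assoc, ← mul_pow]
    norm_num [div_eq_mul_inv]
  have hgeom : ∀ x ∈ Ioo (0 : ℝ) 1,
      ∑' n : ℕ, x ^ n * log x ^ (k + 1) = log x ^ (k + 1) / (1 - x) := fun x hx ↦ by
    rw [tsum_mul_right, tsum_geometric_of_lt_one hx.1.le hx.2, inv_mul_eq_div]
  have hsum : Summable fun n : ℕ ↦ ∫ x in Ioo (0 : ℝ) 1, ‖x ^ n * log x ^ (k + 1)‖ := by
    simp only [hnorm]
    exact (summable_one_div_add_one_pow (by lia)).mul_left _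
  rw [← setIntegral_congr_fun measurableSet_Ioo hgeom, ← integral_tsum_of_summable_integral_norm
    (fun n ↦ integrableOn_pow_mul_log_pow n (k + 1)) hsum, ← tsum_mul_left]
  refine tsum_congr fun n ↦ ?_
  rw [integral_pow_mul_log_pow]
  ring

lemma integrableOn_log_one_sub_pow_succ_div (k : ℕ) :
    IntegrableOn (fun x : ℝ ↦ log (1 - x) ^ (k + 1) / x) (Ioo 0 1) := by
  simpa using (integrableOn_Ioo_comp_one_sub_iff _).2 (integrableOn_log_pow_succ_div_one_sub k)

lemma integral_log_one_sub_pow_succ_div (k : ℕ) :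
    ∫ x in Ioo (0 : ℝ) 1, log (1 - x) ^ (k + 1) / x =
      ∫ x in Ioo (0 : ℝ) 1, log x ^ (k + 1) / (1 - x) := by
  simpa using integral_Ioo_comp_one_sub fun x : ℝ ↦ log x ^ (k + 1) / (1 - x)

lemma integrableOn_log_one_sub_pow_pow_succ_div {p : ℕ} (hp : p ≠ 0) (k : ℕ) :
    IntegrableOn (fun x : ℝ ↦ log (1 - x ^ p) ^ (k + 1) / x) (Ioo 0 1) := by
  simpa [div_eq_inv_mul] using
    (integrableOn_inv_smul_comp_pow_iff hp fun x : ℝ ↦ log (1 - x) ^ (k + 1)).2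
      (by simpa [div_eq_inv_mul] using integrableOn_log_one_sub_pow_succ_div k)

lemma integral_log_one_sub_pow_pow_div {p : ℕ} (hp : p ≠ 0) (k : ℕ) :
    ∫ x in Ioo (0 : ℝ) 1, log (1 - x ^ p) ^ k / x =
      (∫ x in Ioo (0 : ℝ) 1, log (1 - x) ^ k / x) / p := by
  simpa [div_eq_inv_mul] using
    integral_inv_smul_comp_pow hp fun x : ℝ ↦ log (1 - x) ^ k

lemma integral_log_pow_succ_div_one_add (k : ℕ) :
    ∫ x in Ioo (0 : ℝ) 1, log x ^ (k + 1) / (1 + x) =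
      (1 - 1 / 2 ^ (k + 1)) * ∫ x in Ioo (0 : ℝ) 1, log x ^ (k + 1) / (1 - x) := by
  -- `1 / (1 + x) = 1 / (1 - x) - 2 * x / (1 - x ^ 2)`, and `x ↦ x ^ 2` handles the last term.
  set g : ℝ → ℝ := fun x ↦ x * (log x ^ (k + 1) / (1 - x))
  have hg : ∀ x ∈ Ioo (0 : ℝ) 1, x⁻¹ • g x = log x ^ (k + 1) / (1 - x) := fun x hx ↦
    inv_mul_cancel_left₀ hx.1.ne' _
  have hsq : IntegrableOn (fun x ↦ x⁻¹ • g (x ^ 2)) (Ioo 0 1) :=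
    (integrableOn_inv_smul_comp_pow_iff two_ne_zero g).2 <|
      (integrableOn_congr_fun hg measurableSet_Ioo).2 (integrableOn_log_pow_succ_div_one_sub k)
  have hsplit : ∀ x ∈ Ioo (0 : ℝ) 1, log x ^ (k + 1) / (1 + x) =
      log x ^ (k + 1) / (1 - x) - 2 / 2 ^ (k + 1) * x⁻¹ • g (x ^ 2) := fun x hx ↦ by
    have hadd : 1 + x ≠ 0 := by linarith [hx.1]
    have hsub : 1 - x ≠ 0 := by linarith [hx.2]
    have hfactor : 1 - x ^ 2 = (1 - x) * (1 + x) := by ring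
    simp only [g, log_pow, hfactor, smul_eq_mul, Nat.cast_ofNat, mul_pow]
    field_simp
    ring
  rw [setIntegral_congr_fun measurableSet_Ioo hsplit,
    integral_sub (integrableOn_log_pow_succ_div_one_sub k) (hsq.const_mul _), integral_const_mul,
    integral_inv_smul_comp_pow two_ne_zero, setIntegral_congr_fun measurableSet_Ioo hg]
  simp only [Nat.cast_ofNat, smul_eq_mul]
  ring

lemma two_div_one_sub_sq_smul_log_pow {x : ℝ} (hx : x ∈ Ioo (0 : ℝ) 1) (k : ℕ) :
    (2 / (1 - x ^ 2)) • log x ^ k = log x ^ k / (1 - x) + log x ^ k / (1 + x) := by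
  have hadd : 1 + x ≠ 0 := by linarith [hx.1]
  have hsub : 1 - x ≠ 0 := by linarith [hx.2]
  have hfactor : 1 - x ^ 2 = (1 - x) * (1 + x) := by ring
  rw [hfactor, smul_eq_mul]
  field_simp
  ring

lemma integrableOn_log_cayley_pow_succ_div (k : ℕ) :
    IntegrableOn (fun x ↦ log (cayley x) ^ (k + 1) / x) (Ioo 0 1) := by
  have h := (integrableOn_inv_smul_comp_cayley_iff fun x ↦ log x ^ (k + 1)).2 <|
    (integrableOn_congr_fun (fun x hx ↦ two_div_one_sub_sq_smul_log_pow hx (k + 1))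
      measurableSet_Ioo).2 <|
      (integrableOn_log_pow_succ_div_one_sub k).add (integrableOn_log_pow_div_one_add (k + 1))
  simpa [div_eq_inv_mul] using h

lemma integral_log_cayley_pow_succ_div (k : ℕ) :
    ∫ x in Ioo (0 : ℝ) 1, log (cayley x) ^ (k + 1) / x =
      (∫ x in Ioo (0 : ℝ) 1, log x ^ (k + 1) / (1 - x)) +
        ∫ x in Ioo (0 : ℝ) 1, log x ^ (k + 1) / (1 + x) := by
  rw [← integral_add (integrableOn_log_pow_succ_div_one_sub k)
    (integrableOn_log_pow_div_one_add (k + 1)), ← setIntegral_congr_fun measurableSet_Ioo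
    fun x hx ↦ two_div_one_sub_sq_smul_log_pow hx (k + 1)]
  simpa [div_eq_inv_mul] using integral_inv_smul_comp_cayley fun x ↦ log x ^ (k + 1)

lemma tsum_one_div_add_one_sq : ∑' n : ℕ, 1 / ((n : ℝ) + 1) ^ 2 = π ^ 2 / 6 := by
  simpa using ((hasSum_nat_add_iff' 1).2 hasSum_zeta_two).tsum_eq

lemma integral_log_div_one_add : ∫ x in Ioo (0 : ℝ) 1, log x / (1 + x) = -(π ^ 2 / 12) := by
  have h := integral_log_pow_succ_div_one_add 0
  rw [integral_log_pow_succ_div_one_sub, zero_add, tsum_one_div_add_one_sq] at h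
  norm_num at h
  linarith

lemma integral_log_sq_div_one_sub :
    ∫ x in Ioo (0 : ℝ) 1, log x ^ 2 / (1 - x) = 2 * ∑' n : ℕ, 1 / ((n : ℝ) + 1) ^ 3 := by
  simpa using integral_log_pow_succ_div_one_sub 1

lemma integral_log_one_sub_sq_div :
    ∫ x in Ioo (0 : ℝ) 1, log (1 - x) ^ 2 / x = 2 * ∑' n : ℕ, 1 / ((n : ℝ) + 1) ^ 3 := by
  rw [integral_log_one_sub_pow_succ_div, integral_log_sq_div_one_sub]

lemma integral_log_one_sub_sq_sq_div :
    ∫ x in Ioo (0 : ℝ) 1, log (1 - x ^ 2) ^ 2 / x = ∑' n : ℕ, 1 / ((n : ℝ) + 1) ^ 3 := by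
  rw [integral_log_one_sub_pow_pow_div two_ne_zero, integral_log_one_sub_sq_div]
  push_cast
  ring

lemma integral_log_cayley_sq_div :
    ∫ x in Ioo (0 : ℝ) 1, log (cayley x) ^ 2 / x =
      7 / 2 * ∑' n : ℕ, 1 / ((n : ℝ) + 1) ^ 3 := by
  rw [integral_log_cayley_pow_succ_div, integral_log_pow_succ_div_one_add,
    integral_log_sq_div_one_sub]
  ring

lemma log_one_sub_sq {x : ℝ} (hadd : 1 + x ≠ 0) (hsub : 1 - x ≠ 0) :
    log (1 - x ^ 2) = log (1 - x) + log (1 + x) := by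
  rw [← log_mul hsub hadd]
  ring_nf

lemma log_cayley {x : ℝ} (hadd : 1 + x ≠ 0) (hsub : 1 - x ≠ 0) :
    log (cayley x) = log (1 - x) - log (1 + x) :=
  log_div hsub hadd

lemma eqOn_log_one_sub_mul_log_one_add_div :
    EqOn (fun x ↦ log (1 - x) * log (1 + x) / x)
      (fun x ↦ 1 / 4 * (log (1 - x ^ 2) ^ 2 / x) - 1 / 4 * (log (cayley x) ^ 2 / x))
      (Ioo 0 1) := fun x hx ↦ by
  have hadd : 1 + x ≠ 0 := by linarith [hx.1]
  have hsub : 1 - x ≠ 0 := by linarith [hx.2]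
  simp only [log_one_sub_sq hadd hsub, log_cayley hadd hsub]
  ring

lemma eqOn_log_one_add_sq_div :
    EqOn (fun x ↦ log (1 + x) ^ 2 / x)
      (fun x ↦ (1 / 2 * (log (1 - x ^ 2) ^ 2 / x) + 1 / 2 * (log (cayley x) ^ 2 / x)) -
        log (1 - x) ^ 2 / x)
      (Ioo 0 1) := fun x hx ↦ by
  have hadd : 1 + x ≠ 0 := by linarith [hx.1]
  have hsub : 1 - x ≠ 0 := by linarith [hx.2]
  simp only [log_one_sub_sq hadd hsub, log_cayley hadd hsub]
  ring

lemma integrableOn_log_one_sub_mul_log_one_add_div :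
    IntegrableOn (fun x ↦ log (1 - x) * log (1 + x) / x) (Ioo 0 1) :=
  (integrableOn_congr_fun eqOn_log_one_sub_mul_log_one_add_div measurableSet_Ioo).2 <|
    ((integrableOn_log_one_sub_pow_pow_succ_div two_ne_zero 1).const_mul _).sub
      ((integrableOn_log_cayley_pow_succ_div 1).const_mul _)

lemma integrableOn_log_one_add_sq_div :
    IntegrableOn (fun x ↦ log (1 + x) ^ 2 / x) (Ioo 0 1) :=
  (integrableOn_congr_fun eqOn_log_one_add_sq_div measurableSet_Ioo).2 <|
    (((integrableOn_log_one_sub_pow_pow_succ_div two_ne_zero 1).const_mul _).add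
      ((integrableOn_log_cayley_pow_succ_div 1).const_mul _)).sub
      (integrableOn_log_one_sub_pow_succ_div 1)

lemma integral_log_one_sub_mul_log_one_add_div :
    ∫ x in Ioo (0 : ℝ) 1, log (1 - x) * log (1 + x) / x =
      -(5 / 8) * ∑' n : ℕ, 1 / ((n : ℝ) + 1) ^ 3 := by
  rw [setIntegral_congr_fun measurableSet_Ioo eqOn_log_one_sub_mul_log_one_add_div,
    integral_sub ((integrableOn_log_one_sub_pow_pow_succ_div two_ne_zero 1).const_mul _)
      ((integrableOn_log_cayley_pow_succ_div 1).const_mul _), integral_const_mul,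
    integral_const_mul, integral_log_one_sub_sq_sq_div, integral_log_cayley_sq_div]
  ring

lemma integral_log_one_add_sq_div :
    ∫ x in Ioo (0 : ℝ) 1, log (1 + x) ^ 2 / x = 1 / 4 * ∑' n : ℕ, 1 / ((n : ℝ) + 1) ^ 3 := by
  have hsq := (integrableOn_log_one_sub_pow_pow_succ_div two_ne_zero 1).const_mul (1 / 2)
  have hcayley := (integrableOn_log_cayley_pow_succ_div 1).const_mul (1 / 2)
  rw [setIntegral_congr_fun measurableSet_Ioo eqOn_log_one_add_sq_div,
    integral_sub (hsq.fun_add hcayley) (integrableOn_log_one_sub_pow_succ_div 1),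
    integral_add hsq hcayley, integral_const_mul, integral_const_mul,
    integral_log_one_sub_sq_sq_div, integral_log_cayley_sq_div, integral_log_one_sub_sq_div]
  ring

lemma log_one_add_mem_Icc {x : ℝ} (hx : 0 ≤ x) : log (1 + x) ∈ Icc 0 x :=
  ⟨log_nonneg (by linarith), by linarith [log_le_sub_one_of_pos (by linarith : 0 < 1 + x)]⟩

lemma integrableOn_log_one_add_mul_log_div_one_add :
    IntegrableOn (fun x ↦ log (1 + x) * (log x / (1 + x))) (Ioo 0 1) := by
  have h := integrableOn_log_pow_div_one_add 1
  simp only [pow_one] at h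
  refine h.bdd_mul (c := 1) (by fun_prop : Measurable _).aestronglyMeasurable
    ((ae_restrict_iff' measurableSet_Ioo).2 (.of_forall fun x hx ↦ ?_))
  obtain ⟨hnonneg, hle⟩ := log_one_add_mem_Icc hx.1.le
  exact (norm_of_nonneg hnonneg).trans_le (hle.trans hx.2.le)

lemma tendsto_log_one_add_sq_mul_log_nhdsGT_zero :
    Tendsto (fun x ↦ log (1 + x) ^ 2 * log x) (𝓝[>] 0) (𝓝 0) := by
  have hlim : Tendsto (fun x : ℝ ↦ |x * log x|) (𝓝[>] 0) (𝓝 0) := by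
    simpa using (continuous_mul_log.abs.tendsto 0).mono_left nhdsWithin_le_nhds
  refine squeeze_zero_norm' ?_ hlim
  filter_upwards [Ioo_mem_nhdsGT (zero_lt_one (α := ℝ))] with x hx
  obtain ⟨hnonneg, hle⟩ := log_one_add_mem_Icc hx.1.le
  rw [norm_mul, norm_of_nonneg (sq_nonneg _), abs_mul, abs_of_pos hx.1, norm_eq_abs]
  gcongr
  nlinarith [hx.2]

lemma integral_log_one_add_mul_log_div_one_add :
    ∫ x in Ioo (0 : ℝ) 1, log (1 + x) * (log x / (1 + x)) =
      -(1 / 2) * ∫ x in Ioo (0 : ℝ) 1, log (1 + x) ^ 2 / x := by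
  have hderiv : ∀ x ∈ Ioo (0 : ℝ) 1, HasDerivAt (fun x ↦ log (1 + x) ^ 2 * log x)
      (log (1 + x) ^ 2 / x + 2 * (log (1 + x) * (log x / (1 + x)))) x := fun x hx ↦ by
    have hadd : 1 + x ≠ 0 := by linarith [hx.1]
    convert! ((((hasDerivAt_id x).const_add 1).log hadd).pow 2).mul
      (hasDerivAt_log hx.1.ne') using 1
    simp only [id, Pi.pow_apply, Nat.cast_ofNat]
    ring
  have hint := integrableOn_log_one_add_mul_log_div_one_add.const_mul 2
  have hone : Tendsto (fun x ↦ log (1 + x) ^ 2 * log x) (𝓝[<] 1) (𝓝 0) := by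
    have hcont : ContinuousAt (fun x ↦ log (1 + x) ^ 2 * log x) 1 := by
      fun_prop (disch := norm_num)
    simpa using hcont.tendsto.mono_left nhdsWithin_le_nhds
  have hftc := intervalIntegral.integral_eq_sub_of_hasDerivAt_of_tendsto zero_lt_one hderiv
    ((intervalIntegrable_iff_integrableOn_Ioo_of_le zero_le_one).2
      (integrableOn_log_one_add_sq_div.add hint))
    tendsto_log_one_add_sq_mul_log_nhdsGT_zero hone
  rw [intervalIntegral.integral_of_le zero_le_one, integral_Ioc_eq_integral_Ioo,
    integral_add integrableOn_log_one_add_sq_div hint, integral_const_mul] at hftc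
  linarith

lemma log_two_div_one_add {x : ℝ} (hx : 1 + x ≠ 0) : log (2 / (1 + x)) = log 2 - log (1 + x) :=
  log_div two_ne_zero hx

lemma integral_one_div_one_add {y : ℝ} (hy : 0 < 1 + y) :
    ∫ x in y..1, 1 / (1 + x) = log (2 / (1 + y)) := by
  rw [intervalIntegral.integral_comp_add_left (fun x : ℝ ↦ 1 / x),
    integral_one_div_of_pos hy (by norm_num), one_add_one_eq_two]

lemma eqOn_log_two_div_one_add_mul_log_div_one_add :
    EqOn (fun x ↦ log (2 / (1 + x)) * (log x / (1 + x)))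
      (fun x ↦ log 2 * (log x / (1 + x)) - log (1 + x) * (log x / (1 + x))) (Ioo 0 1) :=
  fun x hx ↦ by
    simp only [log_two_div_one_add (by linarith [hx.1] : 1 + x ≠ 0), sub_mul]

lemma integrableOn_log_div_one_add : IntegrableOn (fun x : ℝ ↦ log x / (1 + x)) (Ioo 0 1) := by
  simpa using integrableOn_log_pow_div_one_add 1

lemma integrableOn_log_two_div_one_add_mul_log_div_one_add :
    IntegrableOn (fun x ↦ log (2 / (1 + x)) * (log x / (1 + x))) (Ioo 0 1) :=
  (integrableOn_congr_fun eqOn_log_two_div_one_add_mul_log_div_one_add measurableSet_Ioo).2 <|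
    (integrableOn_log_div_one_add.const_mul _).sub integrableOn_log_one_add_mul_log_div_one_add

lemma integral_log_two_div_one_add_mul_log_div_one_add :
    ∫ x in Ioo (0 : ℝ) 1, log (2 / (1 + x)) * (log x / (1 + x)) =
      1 / 8 * (∑' n : ℕ, 1 / ((n : ℝ) + 1) ^ 3) - π ^ 2 / 12 * log 2 := by
  rw [setIntegral_congr_fun measurableSet_Ioo eqOn_log_two_div_one_add_mul_log_div_one_add,
    integral_sub (integrableOn_log_div_one_add.const_mul _)
      integrableOn_log_one_add_mul_log_div_one_add, integral_const_mul,
    integral_log_div_one_add, integral_log_one_add_mul_log_div_one_add,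
    integral_log_one_add_sq_div]
  ring

lemma eqOn_inv_smul_log_two_div_one_add_cayley_mul_log_cayley :
    EqOn (fun x ↦ x⁻¹ • (log (2 / (1 + cayley x)) * log (cayley x)))
      (fun x ↦ log (1 - x) * log (1 + x) / x - log (1 + x) ^ 2 / x) (Ioo 0 1) := fun x hx ↦ by
  have hadd : 1 + x ≠ 0 := by linarith [hx.1]
  have hsub : 1 - x ≠ 0 := by linarith [hx.2]
  simp only [one_add_cayley hadd, div_div_cancel₀ (two_ne_zero (α := ℝ)), log_cayley hadd hsub,
    smul_eq_mul]
  ring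

lemma integrableOn_two_div_one_sub_sq_smul_log_two_div_one_add_mul_log :
    IntegrableOn (fun x : ℝ ↦ (2 / (1 - x ^ 2)) • (log (2 / (1 + x)) * log x)) (Ioo 0 1) :=
  (integrableOn_inv_smul_comp_cayley_iff fun x ↦ log (2 / (1 + x)) * log x).1 <|
    (integrableOn_congr_fun eqOn_inv_smul_log_two_div_one_add_cayley_mul_log_cayley
      measurableSet_Ioo).2 <|
      integrableOn_log_one_sub_mul_log_one_add_div.sub integrableOn_log_one_add_sq_div

lemma integral_two_div_one_sub_sq_smul_log_two_div_one_add_mul_log :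
    ∫ x in Ioo (0 : ℝ) 1, (2 / (1 - x ^ 2)) • (log (2 / (1 + x)) * log x) =
      -(7 / 8) * ∑' n : ℕ, 1 / ((n : ℝ) + 1) ^ 3 := by
  rw [← integral_inv_smul_comp_cayley fun x ↦ log (2 / (1 + x)) * log x,
    setIntegral_congr_fun measurableSet_Ioo
      eqOn_inv_smul_log_two_div_one_add_cayley_mul_log_cayley,
    integral_sub integrableOn_log_one_sub_mul_log_one_add_div integrableOn_log_one_add_sq_div,
    integral_log_one_sub_mul_log_one_add_div, integral_log_one_add_sq_div]
  ring

lemma eqOn_log_two_div_one_add_mul_log_div_sub_one :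
    EqOn (fun x ↦ log (2 / (1 + x)) * (log x / (x - 1)))
      (fun x ↦ log (2 / (1 + x)) * (log x / (1 + x)) -
        (2 / (1 - x ^ 2)) • (log (2 / (1 + x)) * log x)) (Ioo 0 1) := fun x hx ↦ by
  have hadd : 1 + x ≠ 0 := by linarith [hx.1]
  have hsub : x - 1 ≠ 0 := by linarith [hx.2]
  have hfactor : 1 - x ^ 2 = -((x - 1) * (1 + x)) := by ring
  simp only [hfactor, smul_eq_mul]
  field_simp
  ring

lemma integral_log_two_div_one_add_mul_log_div_sub_one :
    ∫ x in (0 : ℝ)..1, log (2 / (1 + x)) * (log x / (x - 1)) =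
      (∑' n : ℕ, 1 / ((n : ℝ) + 1) ^ 3) - π ^ 2 / 12 * log 2 := by
  rw [intervalIntegral.integral_of_le zero_le_one, integral_Ioc_eq_integral_Ioo,
    setIntegral_congr_fun measurableSet_Ioo eqOn_log_two_div_one_add_mul_log_div_sub_one,
    integral_sub integrableOn_log_two_div_one_add_mul_log_div_one_add
      integrableOn_two_div_one_sub_sq_smul_log_two_div_one_add_mul_log,
    integral_log_two_div_one_add_mul_log_div_one_add,
    integral_two_div_one_sub_sq_smul_log_two_div_one_add_mul_log]
  ring

lemma intervalIntegrable_log_div_sub_one :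
    IntervalIntegrable (fun x : ℝ ↦ log x / (x - 1)) volume 0 1 := by
  rw [intervalIntegrable_iff_integrableOn_Ioo_of_le zero_le_one]
  simpa [← div_neg] using (integrableOn_log_pow_succ_div_one_sub 0).fun_neg

lemma intervalIntegrable_one_div_one_add :
    IntervalIntegrable (fun x : ℝ ↦ 1 / (1 + x)) volume 0 1 := by
  refine ContinuousOn.intervalIntegrable_of_Icc zero_le_one ?_
  exact continuousOn_const.div (by fun_prop) fun x hx ↦ by linarith [hx.1]

/-- `∫₀¹ (1/(1+x))·(∫₀ˣ log(y)/(y−1) dy) dx = ζ(3) − (π²/12)·log(2)`. -/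
theorem integral_dilog_kernel_zero :
    ∫ x in (0:ℝ)..1, (1 / (1 + x)) * (∫ y in (0:ℝ)..x, Real.log y / (y - 1)) =
      (∑' k : ℕ, 1 / ((k : ℝ) + 1) ^ 3) - (π ^ 2 / 12) * Real.log 2 := by
  calc ∫ x in (0:ℝ)..1, (1 / (1 + x)) * (∫ y in (0:ℝ)..x, log y / (y - 1))
      = ∫ y in (0:ℝ)..1, (∫ x in y..1, 1 / (1 + x)) * (log y / (y - 1)) :=
        integral_mul_primitive_eq intervalIntegrable_log_div_sub_one
          intervalIntegrable_one_div_one_add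
    _ = ∫ y in (0:ℝ)..1, log (2 / (1 + y)) * (log y / (y - 1)) :=
        intervalIntegral.integral_congr_Ioo_of_le zero_le_one fun y hy ↦ by
          simp only [integral_one_div_one_add (by linarith [hy.1] : 0 < 1 + y)]
    _ = (∑' k : ℕ, 1 / ((k : ℝ) + 1) ^ 3) - π ^ 2 / 12 * log 2 :=
        integral_log_two_div_one_add_mul_log_div_sub_one
end

section
/- ∫₀¹ (x/(1+x)) · ( ∫₀ˣ log(y)/(y−1) dy ) dx = ( log(2)·(π²/6) − 2·ζ(3) + 2 )/2, where ζ(3) = Σ_{k=1}^{∞} 1/k³. -/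
open MeasureTheory Real

/-! Integrating by parts against `x - log (1 + x)` removes the inner integral and leaves, besides
`∫₀¹ log x dx`, the integral `∫₀¹ (log 2 - log (1 + x)) log x / (x - 1) dx`.

In the latter, write `1 / (1 - x) = 2 / (1 - x²) - 1 / (1 + x)`. The involution
`x ↦ (1 - x) / (1 + x)` turns the first part into
`∫₀¹ log (1 + x) (log (1 + x) - log (1 - x)) / x dx`, and an integration by parts against
`log² (1 + x)` turns the second into `∫₀¹ log x / (1 + x) dx` and `∫₀¹ log² (1 + x) / x dx`.

All integrals of products of `log (1 - x)` and `log (1 + x)` against `1 / x` follow, by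
polarization, from those of the squares of `log (1 - x)`, `log (1 - x) + log (1 + x) = log (1 - x²)`
and `log (1 - x) - log (1 + x) = log ((1 - x) / (1 + x))`. A substitution carries each of these to
`∫₀¹ log² x / (1 ± x) dx`, a geometric series of moments of `log² x`. -/

section

open Set Filter Topology
open scoped Nat

section HasIntegralOn

variable {α E : Type*} [MeasureSpace α] [NormedAddCommGroup E] [NormedSpace ℝ E]
  {f g : α → E} {s : Set α} {v w : E}

/-- `f` is integrable on `s`, with integral `v`, for the canonical measure: the analogue for
integrals of `HasSum`, so that values can be combined without separate integrability proofs. -/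
def HasIntegralOn (f : α → E) (s : Set α) (v : E) : Prop :=
  IntegrableOn f s ∧ ∫ x in s, f x = v

namespace HasIntegralOn

theorem congr (hf : HasIntegralOn f s v) (hs : MeasurableSet s) (hfg : EqOn f g s)
    (hvw : v = w) : HasIntegralOn g s w :=
  ⟨hf.1.congr_fun hfg hs, by rw [← setIntegral_congr_fun hs hfg, hf.2, hvw]⟩

theorem add (hf : HasIntegralOn f s v) (hg : HasIntegralOn g s w) :
    HasIntegralOn (fun x => f x + g x) s (v + w) :=
  ⟨hf.1.add hg.1, by rw [integral_add hf.1 hg.1, hf.2, hg.2]⟩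

theorem sub (hf : HasIntegralOn f s v) (hg : HasIntegralOn g s w) :
    HasIntegralOn (fun x => f x - g x) s (v - w) :=
  ⟨hf.1.sub hg.1, by rw [integral_sub hf.1 hg.1, hf.2, hg.2]⟩

theorem const_mul {f : α → ℝ} {v : ℝ} (hf : HasIntegralOn f s v) (c : ℝ) :
    HasIntegralOn (fun x => c * f x) s (c * v) :=
  ⟨Integrable.const_mul hf.1 c, by rw [integral_const_mul, hf.2]⟩

theorem of_hasSum_of_nonneg {ι : Type*} [Countable ι] {F : ι → α → ℝ} {f : α → ℝ}
    {c : ι → ℝ} {v : ℝ} (hs : MeasurableSet s) (hF : ∀ i, HasIntegralOn (F i) s (c i))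
    (hF_nonneg : ∀ i, ∀ x ∈ s, 0 ≤ F i x) (hf : ∀ x ∈ s, HasSum (F · x) (f x))
    (hc : HasSum c v) : HasIntegralOn f s v := by
  have hF_nonneg' (i) : 0 ≤ᵐ[volume.restrict s] F i := ae_restrict_of_forall_mem hs (hF_nonneg i)
  have hf_nonneg : 0 ≤ᵐ[volume.restrict s] f :=
    ae_restrict_of_forall_mem hs fun x hx => (hf x hx).nonneg (hF_nonneg · x hx)
  have hc_nonneg (i) : 0 ≤ c i := (hF i).2 ▸ setIntegral_nonneg hs (hF_nonneg i)
  have hf_meas : AEStronglyMeasurable f (volume.restrict s) :=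
    aestronglyMeasurable_of_tendsto_ae atTop
      (fun t : Finset ι => t.aestronglyMeasurable_fun_sum fun i _ => (hF i).1.1)
      (ae_restrict_of_forall_mem hs hf)
  have hf_lintegral : ∫⁻ x in s, ENNReal.ofReal (f x) = ENNReal.ofReal v := calc
    _ = ∫⁻ x in s, ∑' i, ENNReal.ofReal (F i x) := setLIntegral_congr_fun hs fun x hx => by
      simp only [← (hf x hx).tsum_eq,
        ENNReal.ofReal_tsum_of_nonneg (hF_nonneg · x hx) (hf x hx).summable]
    _ = ∑' i, ENNReal.ofReal (c i) := by
      rw [lintegral_tsum fun i => (hF i).1.1.aemeasurable.ennreal_ofReal]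
      exact tsum_congr fun i => by
        rw [← ofReal_integral_eq_lintegral_ofReal (hF i).1 (hF_nonneg' i), (hF i).2]
    _ = ENNReal.ofReal v := by
      rw [← ENNReal.ofReal_tsum_of_nonneg hc_nonneg hc.summable, hc.tsum_eq]
  refine ⟨⟨hf_meas, (hasFiniteIntegral_iff_ofReal hf_nonneg).2 ?_⟩, ?_⟩
  · exact hf_lintegral ▸ ENNReal.ofReal_lt_top
  · rw [integral_eq_lintegral_of_nonneg_ae hf_nonneg hf_meas, hf_lintegral,
      ENNReal.toReal_ofReal (hc.nonneg hc_nonneg)]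

theorem intervalIntegrable {a b : ℝ} {f : ℝ → E} (hf : HasIntegralOn f (Ioo a b) v)
    (hab : a ≤ b) : IntervalIntegrable f volume a b :=
  (intervalIntegrable_iff_integrableOn_Ioo_of_le hab).2 hf.1

theorem intervalIntegral_eq {a b : ℝ} {f : ℝ → E} (hf : HasIntegralOn f (Ioo a b) v)
    (hab : a ≤ b) : ∫ x in a..b, f x = v := by
  rw [intervalIntegral.integral_of_le hab, integral_Ioc_eq_integral_Ioo, hf.2]

end HasIntegralOn

theorem hasIntegralOn_image_iff {u u' : ℝ → ℝ} {s : Set ℝ} {f : ℝ → E}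
    (hs : MeasurableSet s) (hu' : ∀ x ∈ s, HasDerivAt u (u' x) x) (hu : InjOn u s) :
    HasIntegralOn f (u '' s) v ↔ HasIntegralOn (fun x => |u' x| • f (u x)) s v := by
  have hu'_within (x : ℝ) (hx : x ∈ s) := (hu' x hx).hasDerivWithinAt (s := s)
  rw [HasIntegralOn, integrableOn_image_iff_integrableOn_abs_deriv_smul hs hu'_within hu,
    integral_image_eq_integral_abs_deriv_smul hs hu'_within hu, HasIntegralOn]

theorem hasIntegralOn_Ioo_of_hasDerivAt_of_tendsto [CompleteSpace E] {a b : ℝ} {f f' : ℝ → E}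
    (hab : a < b) (hderiv : ∀ x ∈ Ioo a b, HasDerivAt f (f' x) x)
    (hint : IntegrableOn f' (Ioo a b)) (ha : Tendsto f (𝓝[>] a) (𝓝 v))
    (hb : Tendsto f (𝓝[<] b) (𝓝 w)) : HasIntegralOn f' (Ioo a b) (w - v) := by
  refine ⟨hint, ?_⟩
  rw [← integral_Ioc_eq_integral_Ioo, ← intervalIntegral.integral_of_le hab.le]
  exact intervalIntegral.integral_eq_sub_of_hasDerivAt_of_tendsto hab hderiv
    ((intervalIntegrable_iff_integrableOn_Ioo_of_le hab.le).2 hint) ha hb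

end HasIntegralOn

section Substitution

variable {E : Type*} [NormedAddCommGroup E] [NormedSpace ℝ E] {f : ℝ → E} {v : E}

theorem HasIntegralOn.comp_sq (hf : HasIntegralOn f (Ioo 0 1) v) :
    HasIntegralOn (fun x => (2 * x) • f (x ^ 2)) (Ioo 0 1) v := by
  have himage : (fun x : ℝ => x ^ 2) '' Ioo 0 1 = Ioo 0 1 := by
    refine Subset.antisymm ?_ fun y hy => ⟨√y, ⟨sqrt_pos.2 hy.1, ?_⟩, sq_sqrt hy.1.le⟩
    · rintro _ ⟨x, hx, rfl⟩
      exact ⟨pow_pos hx.1 2, pow_lt_one₀ hx.1.le hx.2 two_ne_zero⟩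
    · simpa using sqrt_lt_sqrt hy.1.le hy.2
  rw [← himage, hasIntegralOn_image_iff (u' := fun x => 2 * x) measurableSet_Ioo] at hf
  · refine hf.congr measurableSet_Ioo (fun x hx => ?_) rfl
    simp only [abs_of_pos (mul_pos two_pos hx.1)]
  · exact fun x _ => by simpa using hasDerivAt_pow 2 x
  · exact fun x hx y hy hxy => (sq_eq_sq₀ hx.1.le hy.1.le).1 hxy

theorem HasIntegralOn.comp_one_sub (hf : HasIntegralOn f (Ioo 0 1) v) :
    HasIntegralOn (fun x => f (1 - x)) (Ioo 0 1) v := by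
  have himage : (fun x : ℝ => 1 - x) '' Ioo 0 1 = Ioo 0 1 := by simp
  rw [← himage, hasIntegralOn_image_iff (u' := fun _ => -1) measurableSet_Ioo
    (fun x _ => by simpa using (hasDerivAt_id x).const_sub 1) sub_right_injective.injOn] at hf
  simpa using hf

theorem HasIntegralOn.comp_one_sub_div_one_add (hf : HasIntegralOn f (Ioo 0 1) v) :
    HasIntegralOn (fun x => (2 / (1 + x) ^ 2) • f ((1 - x) / (1 + x))) (Ioo 0 1) v := by
  have hinvol (x : ℝ) (hx : x ∈ Ioo (0 : ℝ) 1) :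
      (1 - (1 - x) / (1 + x)) / (1 + (1 - x) / (1 + x)) = x := by
    have : 1 + x ≠ 0 := by linarith [hx.1]
    field_simp
    ring
  have hmaps : MapsTo (fun x : ℝ => (1 - x) / (1 + x)) (Ioo 0 1) (Ioo 0 1) := fun x hx => by
    have : 0 < 1 + x := by linarith [hx.1]
    exact ⟨div_pos (by linarith [hx.2]) this, (div_lt_one this).2 (by linarith [hx.1])⟩
  have himage : (fun x : ℝ => (1 - x) / (1 + x)) '' Ioo 0 1 = Ioo 0 1 :=
    hmaps.image_subset.antisymm fun y hy => ⟨_, hmaps hy, hinvol y hy⟩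
  rw [← himage, hasIntegralOn_image_iff (u' := fun x => -(2 / (1 + x) ^ 2)) measurableSet_Ioo] at hf
  · refine hf.congr measurableSet_Ioo (fun x _ => ?_) rfl
    simp only [abs_neg, abs_of_nonneg (show 0 ≤ 2 / (1 + x) ^ 2 by positivity)]
  · intro x hx
    have : 1 + x ≠ 0 := by linarith [hx.1]
    refine (((hasDerivAt_id x).const_sub 1).div ((hasDerivAt_id x).const_add 1) this).congr_deriv ?_
    simp only [id]
    field_simp
    ring
  · exact LeftInvOn.injOn (f₁' := fun x => (1 - x) / (1 + x)) hinvol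

end Substitution

theorem integral_primitive_mul_deriv {f v v' : ℝ → ℝ} {a b : ℝ}
    (hf : IntervalIntegrable f volume a b) (hf_cont : ContinuousOn f (Ioo (min a b) (max a b)))
    (hv : ContinuousOn v (uIcc a b))
    (hv_deriv : ∀ x ∈ Ioo (min a b) (max a b), HasDerivAt v (v' x) x)
    (hv' : IntervalIntegrable v' volume a b) :
    ∫ x in a..b, (∫ y in a..x, f y) * v' x = ∫ x in a..b, f x * (v b - v x) := by
  have hprim_deriv (x : ℝ) (hx : x ∈ Ioo (min a b) (max a b)) :
      HasDerivAt (fun x => ∫ y in a..x, f y) (f x) x :=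
    intervalIntegral.integral_hasDerivAt_right
      (hf.mono_set (uIcc_subset_uIcc left_mem_uIcc (Ioo_subset_Icc_self hx)))
      (hf_cont.stronglyMeasurableAtFilter isOpen_Ioo x hx)
      (hf_cont.continuousAt (isOpen_Ioo.mem_nhds hx))
  rw [intervalIntegral.integral_mul_deriv_eq_deriv_mul_of_hasDerivAt
    (intervalIntegral.continuousOn_primitive_interval' hf left_mem_uIcc) hv hprim_deriv hv_deriv
    hf hv']
  simp only [mul_sub, intervalIntegral.integral_same, zero_mul, sub_zero]
  rw [intervalIntegral.integral_sub (hf.mul_const _) (hf.mul_continuousOn hv),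
    intervalIntegral.integral_mul_const]

/-- The value `ζ(s)` of the Riemann zeta function at a natural number `s ≥ 2` (and `0` for
`s ≤ 1`, where the series diverges); the index `k` stands for the term `1 / n ^ s` with
`n = k + 1`. -/
noncomputable def zetaNat (s : ℕ) : ℝ := ∑' k : ℕ, 1 / ((k : ℝ) + 1) ^ s

theorem hasSum_zetaNat {s : ℕ} (hs : 1 < s) :
    HasSum (fun k : ℕ => 1 / ((k : ℝ) + 1) ^ s) (zetaNat s) := by
  have h := (summable_nat_add_iff 1).2 (Real.summable_one_div_nat_pow.2 hs)
  push_cast at h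
  exact h.hasSum

theorem zetaNat_two : zetaNat 2 = π ^ 2 / 6 := by
  have h := (hasSum_nat_add_iff' 1).2 hasSum_zeta_two
  simp only [Finset.sum_range_one, Nat.cast_zero, ne_eq, OfNat.ofNat_ne_zero, not_false_eq_true,
    zero_pow, div_zero, sub_zero, Nat.cast_add, Nat.cast_one] at h
  exact h.tsum_eq

theorem hasIntegralOn_pow_mul_exp_neg_mul_Ioi (n : ℕ) {r : ℝ} (hr : 0 < r) :
    HasIntegralOn (fun t : ℝ => t ^ n * exp (-(r * t))) (Ioi 0) (n ! / r ^ (n + 1)) := by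
  have hvalue : ∫ t in Ioi (0 : ℝ), t ^ n * exp (-(r * t)) = n ! / r ^ (n + 1) := by
    have h := integral_rpow_mul_exp_neg_mul_Ioi (a := (n : ℝ) + 1) (by positivity) hr
    simp only [add_sub_cancel_right, rpow_natCast, Gamma_nat_eq_factorial] at h
    rw [h, ← Nat.cast_succ, rpow_natCast, one_div_pow, one_div_mul_eq_div]
  exact ⟨Integrable.of_integral_ne_zero (by rw [hvalue]; positivity), hvalue⟩

theorem hasIntegralOn_pow_mul_neg_log_pow (k n : ℕ) :
    HasIntegralOn (fun x => x ^ k * (-log x) ^ n) (Ioo 0 1) (n ! / ((k : ℝ) + 1) ^ (n + 1)) := by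
  have himage : (fun t => exp (-t)) '' Ioi 0 = Ioo 0 1 := by
    refine Subset.antisymm ?_ fun x hx => ⟨-log x, neg_pos.2 (log_neg hx.1 hx.2), ?_⟩
    · rintro _ ⟨t, ht, rfl⟩
      exact ⟨exp_pos _, exp_lt_one_iff.2 (neg_lt_zero.2 ht)⟩
    · simp only [neg_neg, exp_log hx.1]
  rw [← himage, hasIntegralOn_image_iff (u' := fun t => -exp (-t)) measurableSet_Ioi
    (fun t _ => by simpa using (hasDerivAt_neg t).exp)
    (fun t _ u _ htu => neg_injective (exp_injective htu))]
  refine (hasIntegralOn_pow_mul_exp_neg_mul_Ioi n k.cast_add_one_pos).congr measurableSet_Ioi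
    (fun t _ => ?_) rfl
  simp only [abs_neg, abs_exp, log_exp, neg_neg, smul_eq_mul]
  rw [← exp_nat_mul, ← mul_assoc, ← exp_add, mul_comm]
  ring_nf

theorem hasIntegralOn_neg_log_pow_div_one_sub {n : ℕ} (hn : 0 < n) :
    HasIntegralOn (fun x => (-log x) ^ n / (1 - x)) (Ioo 0 1) (n ! * zetaNat (n + 1)) := by
  refine HasIntegralOn.of_hasSum_of_nonneg measurableSet_Ioo
    (fun k => hasIntegralOn_pow_mul_neg_log_pow k n) (fun k x hx => ?_) (fun x hx => ?_) ?_
  · exact mul_nonneg (pow_nonneg hx.1.le k)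
      (pow_nonneg (neg_nonneg.2 (log_nonpos hx.1.le hx.2.le)) n)
  · simpa only [div_eq_inv_mul] using
      (hasSum_geometric_of_lt_one hx.1.le hx.2).mul_right ((-log x) ^ n)
  · simpa only [mul_one_div] using (hasSum_zetaNat (Nat.succ_lt_succ hn)).mul_left (n ! : ℝ)

theorem hasIntegralOn_neg_log_pow_div_one_add {n : ℕ} (hn : 0 < n) :
    HasIntegralOn (fun x => (-log x) ^ n / (1 + x)) (Ioo 0 1)
      ((1 - (1 / 2) ^ n) * (n ! * zetaNat (n + 1))) := by
  have h := hasIntegralOn_neg_log_pow_div_one_sub hn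
  refine (h.sub (h.comp_sq.const_mul ((1 / 2) ^ n))).congr measurableSet_Ioo (fun x hx => ?_)
    (by ring)
  have h_add : 1 + x ≠ 0 := by linarith [hx.1]
  have h_sub : 1 - x ≠ 0 := by linarith [hx.2]
  have hlog : -log (x ^ 2) = 2 * -log x := by rw [log_pow]; push_cast; ring
  simp only [smul_eq_mul, hlog, mul_pow, one_div_pow, show 1 - x ^ 2 = (1 - x) * (1 + x) by ring]
  field_simp
  ring

theorem hasIntegralOn_log_sq_one_sub_div :
    HasIntegralOn (fun x => log (1 - x) ^ 2 / x) (Ioo 0 1) (2 * zetaNat 3) :=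
  (hasIntegralOn_neg_log_pow_div_one_sub two_pos).comp_one_sub.congr measurableSet_Ioo
    (fun x _ => by simp only [neg_sq, sub_sub_cancel]) (by norm_num)

theorem hasIntegralOn_log_one_sub_add_log_one_add_sq_div :
    HasIntegralOn (fun x => (log (1 - x) + log (1 + x)) ^ 2 / x) (Ioo 0 1) (zetaNat 3) := by
  refine (hasIntegralOn_log_sq_one_sub_div.comp_sq.const_mul (1 / 2)).congr measurableSet_Ioo
    (fun x hx => ?_) (by ring)
  have h_add : 1 + x ≠ 0 := by linarith [hx.1]
  have h_sub : 1 - x ≠ 0 := by linarith [hx.2]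
  have h_ne : x ≠ 0 := hx.1.ne'
  simp only [smul_eq_mul, show 1 - x ^ 2 = (1 - x) * (1 + x) by ring, log_mul h_sub h_add]
  field_simp

theorem hasIntegralOn_log_one_sub_sub_log_one_add_sq_div :
    HasIntegralOn (fun x => (log (1 - x) - log (1 + x)) ^ 2 / x) (Ioo 0 1)
      (7 / 2 * zetaNat 3) := by
  refine ((hasIntegralOn_neg_log_pow_div_one_sub two_pos).add
    (hasIntegralOn_neg_log_pow_div_one_add two_pos)).comp_one_sub_div_one_add.congr
    measurableSet_Ioo (fun x hx => ?_) (by norm_num; ring)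
  have h_add : 1 + x ≠ 0 := by linarith [hx.1]
  have h_sub : 1 - x ≠ 0 := by linarith [hx.2]
  have h_ne : x ≠ 0 := hx.1.ne'
  simp only [smul_eq_mul, neg_sq, log_div h_sub h_add,
    show 1 - (1 - x) / (1 + x) = 2 * x / (1 + x) by field_simp; ring,
    show 1 + (1 - x) / (1 + x) = 2 / (1 + x) by field_simp; ring]
  field_simp

theorem hasIntegralOn_log_one_add_sq_div :
    HasIntegralOn (fun x => log (1 + x) ^ 2 / x) (Ioo 0 1) (1 / 4 * zetaNat 3) :=
  (((hasIntegralOn_log_one_sub_add_log_one_add_sq_div.add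
    hasIntegralOn_log_one_sub_sub_log_one_add_sq_div).const_mul (1 / 2)).sub
    hasIntegralOn_log_sq_one_sub_div).congr measurableSet_Ioo (fun x _ => by ring) (by ring)

theorem hasIntegralOn_log_one_add_mul_log_one_add_sub_log_one_sub_div :
    HasIntegralOn (fun x => log (1 + x) * (log (1 + x) - log (1 - x)) / x) (Ioo 0 1)
      (7 / 8 * zetaNat 3) :=
  (((hasIntegralOn_log_one_sub_sub_log_one_add_sq_div.add
    hasIntegralOn_log_one_add_sq_div).sub
    hasIntegralOn_log_sq_one_sub_div).const_mul (1 / 2)).congr measurableSet_Ioo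
    (fun x _ => by ring) (by ring)

theorem hasDerivAt_log_one_add {x : ℝ} (hx : 0 < 1 + x) :
    HasDerivAt (fun x => log (1 + x)) (1 / (1 + x)) x :=
  ((hasDerivAt_id x).const_add 1).log hx.ne'

theorem tendsto_log_mul_log_one_add_sq_nhdsGT_zero :
    Tendsto (fun x => log x * log (1 + x) ^ 2) (𝓝[>] 0) (𝓝 0) := by
  refine squeeze_zero_norm' ?_ 
    (by simpa using (tendsto_log_mul_rpow_nhdsGT_zero zero_lt_one).norm)
  filter_upwards [Ioo_mem_nhdsGT zero_lt_one] with x hx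
  have h_nonneg : 0 ≤ log (1 + x) := log_nonneg (by linarith [hx.1])
  have h_le : log (1 + x) ≤ x := by
    linarith [log_le_sub_one_of_pos (show 0 < 1 + x by linarith [hx.1])]
  have h_sq_le : log (1 + x) ^ 2 ≤ x := by nlinarith [hx.2]
  rw [norm_mul, norm_of_nonneg (sq_nonneg _), abs_of_pos hx.1, norm_eq_abs]
  gcongr

theorem hasIntegralOn_log_mul_log_one_add_div_one_add :
    HasIntegralOn (fun x => log x * log (1 + x) / (1 + x)) (Ioo 0 1) (-(1 / 8 * zetaNat 3)) := by
  have hint : IntegrableOn (fun x => log x * log (1 + x) / (1 + x)) (Ioo 0 1) := by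
    have hcont : ContinuousOn (fun x : ℝ => log (1 + x) / (1 + x)) (uIcc 0 1) := by
      refine fun x hx => ContinuousAt.continuousWithinAt ?_
      have : 0 < 1 + x := by linarith [(uIcc_of_le (zero_le_one' ℝ) ▸ hx).1]
      exact (hasDerivAt_log_one_add this).continuousAt.div (by fun_prop) this.ne'
    simpa only [mul_div_assoc] using
      (intervalIntegrable_iff_integrableOn_Ioo_of_le (zero_le_one' ℝ)).1
        (intervalIntegral.intervalIntegrable_log'.mul_continuousOn hcont)
  have hsq := hasIntegralOn_log_one_add_sq_div
  have hderiv (x : ℝ) (hx : x ∈ Ioo (0 : ℝ) 1) :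
      HasDerivAt (fun x => log x * log (1 + x) ^ 2)
        (log (1 + x) ^ 2 / x + 2 * (log x * log (1 + x) / (1 + x))) x := by
    refine ((hasDerivAt_log hx.1.ne').mul
      ((hasDerivAt_log_one_add (by linarith [hx.1])).pow 2)).congr_deriv ?_
    simp only [Pi.pow_apply]
    push_cast
    ring
  have hone : Tendsto (fun x => log x * log (1 + x) ^ 2) (𝓝[<] 1) (𝓝 0) := by
    have : ContinuousAt (fun x => log x * log (1 + x) ^ 2) 1 :=
      (continuousAt_log one_ne_zero).mul
        ((hasDerivAt_log_one_add (by norm_num)).continuousAt.pow 2)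
    simpa using this.tendsto.mono_left nhdsWithin_le_nhds
  have h := hasIntegralOn_Ioo_of_hasDerivAt_of_tendsto zero_lt_one hderiv
    (hsq.1.add (hint.const_mul 2)) tendsto_log_mul_log_one_add_sq_nhdsGT_zero hone
  exact ((h.sub hsq).const_mul (1 / 2)).congr measurableSet_Ioo (fun x _ => by ring) (by ring)

theorem hasIntegralOn_log_div_mul_log_two_sub_log_one_add :
    HasIntegralOn (fun x => log x / (x - 1) * (log 2 - log (1 + x))) (Ioo 0 1)
      (zetaNat 3 - log 2 * zetaNat 2 / 2) := by
  have h_symm :=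
    hasIntegralOn_log_one_add_mul_log_one_add_sub_log_one_sub_div.comp_one_sub_div_one_add
  have h_add := (hasIntegralOn_neg_log_pow_div_one_add one_pos).const_mul (log 2)
  refine ((h_symm.sub h_add).sub hasIntegralOn_log_mul_log_one_add_div_one_add).congr
    measurableSet_Ioo (fun x hx => ?_) (by norm_num; ring)
  have h_pos : 0 < 1 + x := by linarith [hx.1]
  have h_sub : 1 - x ≠ 0 := by linarith [hx.2]
  have h_sub' : x - 1 ≠ 0 := by linarith [hx.2]
  have h_ne : x ≠ 0 := hx.1.ne'
  simp only [smul_eq_mul, pow_one,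
    show 1 - (1 - x) / (1 + x) = 2 * x / (1 + x) by field_simp; ring,
    show 1 + (1 - x) / (1 + x) = 2 / (1 + x) by field_simp; ring,
    log_div two_ne_zero h_pos.ne', log_div (mul_ne_zero two_ne_zero h_ne) h_pos.ne',
    log_mul two_ne_zero h_ne]
  field_simp
  ring

theorem hasIntegralOn_log_div_sub_one :
    HasIntegralOn (fun x => log x / (x - 1)) (Ioo 0 1) (zetaNat 2) :=
  (hasIntegralOn_neg_log_pow_div_one_sub one_pos).congr measurableSet_Ioo
    (fun x _ => by simp only [pow_one, ← neg_sub x 1, neg_div_neg_eq]) (by simp)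

theorem hasDerivAt_sub_log_one_add {x : ℝ} (hx : 0 < 1 + x) :
    HasDerivAt (fun x => x - log (1 + x)) (x / (1 + x)) x :=
  ((hasDerivAt_id x).sub (hasDerivAt_log_one_add hx)).congr_deriv (by field_simp; ring)

theorem integral_integral_log_div_sub_one_mul_div_one_add :
    ∫ x in (0 : ℝ)..1, (∫ y in (0 : ℝ)..x, log y / (y - 1)) * (x / (1 + x)) =
      ∫ x in (0 : ℝ)..1, log x / (x - 1) * (1 - log (1 + 1) - (x - log (1 + x))) := by
  have hpos (x : ℝ) (hx : x ∈ uIcc 0 1) : 0 < 1 + x := by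
    linarith [(uIcc_of_le (zero_le_one' ℝ) ▸ hx).1]
  refine integral_primitive_mul_deriv (v := fun x => x - log (1 + x))
    (hasIntegralOn_log_div_sub_one.intervalIntegrable zero_le_one) ?_
    (fun x hx => (hasDerivAt_sub_log_one_add (hpos x hx)).continuousAt.continuousWithinAt)
    (fun x hx => hasDerivAt_sub_log_one_add (hpos x (Ioo_subset_Icc_self hx)))
    (continuousOn_id.div (by fun_prop) fun x hx => (hpos x hx).ne').intervalIntegrable
  rw [min_eq_left zero_le_one, max_eq_right zero_le_one]
  exact (continuousOn_log.mono fun x hx => hx.1.ne').div (by fun_prop)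
    fun x hx => (sub_neg.2 hx.2).ne

theorem hasIntegralOn_log_div_mul_sub_sub_log_one_add :
    HasIntegralOn (fun x => log x / (x - 1) * (1 - log (1 + 1) - (x - log (1 + x)))) (Ioo 0 1)
      (1 - (zetaNat 3 - log 2 * zetaNat 2 / 2)) := by
  refine ((hasIntegralOn_pow_mul_neg_log_pow 0 1).sub
    hasIntegralOn_log_div_mul_log_two_sub_log_one_add).congr measurableSet_Ioo
    (fun x hx => ?_) (by norm_num)
  have h_sub : x - 1 ≠ 0 := by linarith [hx.2]
  simp only [pow_zero, one_mul, pow_one, one_add_one_eq_two]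
  field_simp
  ring

end

/-- `∫₀¹ (x/(1+x))·(∫₀ˣ log(y)/(y−1) dy) dx = (log(2)·π²/6 − 2ζ(3) + 2)/2`. -/
theorem integral_dilog_kernel_one :
    ∫ x in (0:ℝ)..1, (x / (1 + x)) * (∫ y in (0:ℝ)..x, Real.log y / (y - 1)) =
      (Real.log 2 * (π ^ 2 / 6) - 2 * (∑' k : ℕ, 1 / ((k : ℝ) + 1) ^ 3) + 2) / 2 :=
  calc
    _ = ∫ x in (0 : ℝ)..1, (∫ y in (0 : ℝ)..x, log y / (y - 1)) * (x / (1 + x)) := by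
      simp only [mul_comm]
    _ = ∫ x in (0 : ℝ)..1, log x / (x - 1) * (1 - log (1 + 1) - (x - log (1 + x))) :=
      integral_integral_log_div_sub_one_mul_div_one_add
    _ = 1 - (zetaNat 3 - log 2 * zetaNat 2 / 2) :=
      hasIntegralOn_log_div_mul_sub_sub_log_one_add.intervalIntegral_eq zero_le_one
    _ = _ := by rw [zetaNat_two, zetaNat]; ring
end
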